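/- Suppose that for every q > 1 one has q ∈ I_ν and φ(q) < 0. Then σ = 0, ν gives no mass to (0, ∞), ∫ min(1, |x|) ν(dx) < ∞, and γ := ∫_{(−∞,0)} (1 − e^x) ν(dx) ≤ 1. -/

import Mathlib

open MeasureTheory

/-- `I_ν = {q : ∫_{|x|≥1} e^{qx} ν(dx) < ∞}`. -/
noncomputable def Inu (ν : Measure ℝ) : Set ℝ :=
  {q : ℝ | ∫⁻ x in {x : ℝ | 1 ≤ |x|}, ENNReal.ofReal (Real.exp (q * x)) ∂ν < ⊤}

/-- The normalizing drift `a = −σ²/2 − ∫ (e^x − 1 − x 1_{|x|≤1}) ν(dx)`. -/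
noncomputable def levyA (σ : ℝ) (ν : Measure ℝ) : ℝ :=
  -σ ^ 2 / 2 - ∫ x, (Real.exp x - 1 - if |x| ≤ 1 then x else 0) ∂ν

/-- `ψ̃(q) = a q + σ² q²/2 + ∫ (e^{qx} − 1 − q x 1_{|x|≤1}) ν(dx)`. -/
noncomputable def psiT (σ : ℝ) (ν : Measure ℝ) (q : ℝ) : ℝ :=
  levyA σ ν * q + σ ^ 2 * q ^ 2 / 2 +
    ∫ x, (Real.exp (q * x) - 1 - q * (if |x| ≤ 1 then x else 0)) ∂ν

/-- `φ(q) = ψ̃(q) − (q − 1)`. -/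
noncomputable def phiF (σ : ℝ) (ν : Measure ℝ) (q : ℝ) : ℝ := psiT σ ν q - (q - 1)

/-!
Since `ψ̃(0) = ψ̃(1) = 0`, the drift and the truncation drop out of the slope
`ψ̃(q) / (q - 1) = σ² q / 2 + ∫ k_q dν`, where `k_q(x)` is the difference of the slopes of
`p ↦ e^{px}` over `[1, q]` and over `[0, 1]`. Both summands are nonnegative, the second one by
convexity. If the slope stays at most `c` along some `q → ∞`, the Gaussian term forces `σ = 0`.
As `k_q(x)` tends to `∞` for `x > 0` and to `1 - e^x` for `x ≤ 0`, Fatou's lemma kills the positive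
jumps and bounds `∫ (1 - e^x) ν(dx)` over the negative ones by `c`.
-/

open Filter ProbabilityTheory Set
open scoped ENNReal Topology

section Fatou

lemma lintegral_le_of_tendsto_of_frequently_le {ι α : Type*} [MeasurableSpace α] {μ : Measure α}
    {l : Filter ι} [l.IsCountablyGenerated] {f : ι → α → ℝ≥0∞} {F : α → ℝ≥0∞} {C : ℝ≥0∞}
    (hf : ∀ i, Measurable (f i)) (hF : ∀ᵐ a ∂μ, Tendsto (fun i => f i a) l (𝓝 (F a)))
    (hC : ∃ᶠ i in l, ∫⁻ a, f i a ∂μ ≤ C) : ∫⁻ a, F a ∂μ ≤ C := by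
  obtain ⟨u, hu, huC⟩ := exists_seq_forall_of_frequently hC
  calc ∫⁻ a, F a ∂μ
      = ∫⁻ a, liminf (fun n => f (u n) a) atTop ∂μ :=
        lintegral_congr_ae <| hF.mono fun _ ha => (ha.comp hu).liminf_eq.symm
    _ ≤ liminf (fun n => ∫⁻ a, f (u n) a ∂μ) atTop := lintegral_liminf_le fun n => hf (u n)
    _ ≤ C := liminf_le_of_frequently_le' (Frequently.of_forall huC)

end Fatou

section ExponentialIntegrability

variable {ν : Measure ℝ} {p q : ℝ}

lemma measure_one_le_abs_lt_top (hν : Integrable (fun x : ℝ => min 1 (x ^ 2)) ν) :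
    ν {x | 1 ≤ |x|} < ∞ := by
  simpa using hν.measure_ge_lt_top one_pos

lemma Inu_eq_integrableExpSet (ν : Measure ℝ) :
    Inu ν = integrableExpSet id (ν.restrict {x | 1 ≤ |x|}) := by
  ext q
  rw [Inu, mem_ofPred_eq, lt_top_iff_ne_top]
  exact lintegral_ofReal_ne_top_iff_integrable (by fun_prop) (ae_of_all _ fun _ => by positivity)

lemma mem_Inu_of_mem_Icc_zero (hν : Integrable (fun x : ℝ => min 1 (x ^ 2)) ν) (hq : q ∈ Inu ν)
    (hp : p ∈ Icc 0 q) : p ∈ Inu ν := by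
  have : IsFiniteMeasure (ν.restrict {x : ℝ | 1 ≤ |x|}) :=
    isFiniteMeasure_restrict.2 (measure_one_le_abs_lt_top hν).ne
  rw [Inu_eq_integrableExpSet] at hq ⊢
  have h0 : (0 : ℝ) ∈ integrableExpSet id (ν.restrict {x | 1 ≤ |x|}) := by
    simp [integrableExpSet]
  exact convex_integrableExpSet.ordConnected.out h0 hq hp

lemma abs_exp_sub_one_sub_id_le_sq_mul_exp_abs (y : ℝ) :
    |Real.exp y - 1 - y| ≤ y ^ 2 * Real.exp |y| := by
  have h := Complex.norm_exp_sub_sum_le_norm_mul_exp (y : ℂ) 2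
  have hsum : Complex.exp y - ∑ m ∈ Finset.range 2, (y : ℂ) ^ m / (m.factorial : ℂ) =
      ((Real.exp y - 1 - y : ℝ) : ℂ) := by
    simp [Finset.sum_range_succ, sub_sub]
  simpa only [hsum, Complex.norm_real, Real.norm_eq_abs, sq_abs] using h

lemma abs_exp_mul_sub_one_sub_truncation_le (q x : ℝ) :
    |Real.exp (q * x) - 1 - q * (if |x| ≤ 1 then x else 0)| ≤
      (q ^ 2 * Real.exp |q| + 1) * min 1 (x ^ 2) +
        {x : ℝ | 1 ≤ |x|}.indicator (fun x => Real.exp (q * x)) x := by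
  rcases le_or_gt |x| 1 with hx | hx
  · have hsmall := abs_exp_sub_one_sub_id_le_sq_mul_exp_abs (q * x)
    have hexp : Real.exp |q * x| ≤ Real.exp |q| :=
      Real.exp_le_exp.2 (abs_mul q x ▸ mul_le_of_le_one_right (abs_nonneg q) hx)
    have hind : 0 ≤ {x : ℝ | 1 ≤ |x|}.indicator (fun x => Real.exp (q * x)) x :=
      indicator_nonneg (fun _ _ => (Real.exp_pos _).le) x
    rw [if_pos hx, min_eq_right (sq_le_one_iff_abs_le_one x |>.2 hx)]
    calc |Real.exp (q * x) - 1 - q * x|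
        ≤ (q * x) ^ 2 * Real.exp |q| := hsmall.trans (by gcongr)
      _ ≤ _ := by linarith [sq_nonneg x]
  · rw [if_neg hx.not_ge, min_eq_left (one_le_sq_iff_one_le_abs x |>.2 hx.le),
      indicator_of_mem (show x ∈ {x : ℝ | 1 ≤ |x|} from hx.le), abs_le]
    have hC : 0 ≤ q ^ 2 * Real.exp |q| := by positivity
    constructor <;> linarith [Real.exp_pos (q * x)]

lemma integrable_exp_mul_sub_one_sub_truncation
    (hν : Integrable (fun x : ℝ => min 1 (x ^ 2)) ν) (hq : q ∈ Inu ν) :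
    Integrable (fun x => Real.exp (q * x) - 1 - q * (if |x| ≤ 1 then x else 0)) ν := by
  have hS : MeasurableSet {x : ℝ | 1 ≤ |x|} := measurableSet_le (by fun_prop) (by fun_prop)
  have hexp : IntegrableOn (fun x => Real.exp (q * x)) {x | 1 ≤ |x|} ν := by
    rwa [Inu_eq_integrableExpSet] at hq
  have htrunc : Measurable fun x : ℝ => if |x| ≤ 1 then x else 0 :=
    measurable_id.ite (measurableSet_le (by fun_prop) (by fun_prop)) measurable_const
  exact ((hν.const_mul _).add (hexp.integrable_indicator hS)).mono' (by fun_prop)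
    (ae_of_all _ (abs_exp_mul_sub_one_sub_truncation_le q))

lemma integrable_exp_sub_one_sub_truncation
    (hν : Integrable (fun x : ℝ => min 1 (x ^ 2)) ν) (hq : 1 ≤ q) (hqν : q ∈ Inu ν) :
    Integrable (fun x => Real.exp x - 1 - if |x| ≤ 1 then x else 0) ν := by
  simpa only [one_mul] using integrable_exp_mul_sub_one_sub_truncation hν
    (mem_Inu_of_mem_Icc_zero hν hqν ⟨zero_le_one, hq⟩)

end ExponentialIntegrability

section SecantKernel

variable {σ c q x : ℝ} {ν : Measure ℝ}

/-- The slope of `p ↦ e^{px}` over `[1, q]` minus its slope over `[0, 1]`. Its `ν`-integral is the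
jump part of the slope `ψ̃(q) / (q - 1)` of `ψ̃` over `[1, q]`. -/
noncomputable def secantKernel (q x : ℝ) : ℝ :=
  (Real.exp (q * x) - Real.exp x) / (q - 1) - (Real.exp x - 1)

@[fun_prop]
lemma measurable_secantKernel (q : ℝ) : Measurable (secantKernel q) := by
  unfold secantKernel
  fun_prop

lemma secantKernel_nonneg (hq : 1 < q) (x : ℝ) : 0 ≤ secantKernel q x := by
  have hconvex : ConvexOn ℝ univ fun p : ℝ => Real.exp (p * x) :=
    convexOn_exp.comp_linearMap (LinearMap.mulRight ℝ x)
  have hslope := hconvex.slope_mono_adjacent (mem_univ 0) (mem_univ q) one_pos hq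
  simpa [secantKernel] using hslope

lemma tendsto_secantKernel_atTop_of_pos (hx : 0 < x) :
    Tendsto (fun q => secantKernel q x) atTop atTop := by
  have hlin : Tendsto (fun q : ℝ => (q - 1) * x) atTop atTop :=
    (tendsto_atTop_add_const_right _ (-1) tendsto_id).atTop_mul_const hx
  have hdiv := (Real.tendsto_mul_exp_add_div_pow_atTop (x * Real.exp x) (-(x * Real.exp x)) 1
    (by positivity)).comp hlin
  refine (tendsto_atTop_add_const_right _ (-(Real.exp x - 1)) hdiv).congr fun q => ?_
  have hexp : Real.exp (q * x) = Real.exp x * Real.exp ((q - 1) * x) := by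
    rw [← Real.exp_add]
    ring_nf
  have hcancel : (x * Real.exp x * Real.exp ((q - 1) * x) + -(x * Real.exp x)) /
      ((q - 1) * x) ^ 1 = (Real.exp x * Real.exp ((q - 1) * x) - Real.exp x) / (q - 1) := by
    rw [pow_one, ← mul_div_mul_right _ (q - 1) hx.ne']
    ring_nf
  rw [secantKernel, hexp, ← hcancel, sub_eq_add_neg _ (Real.exp x - 1), Function.comp_apply]

lemma tendsto_secantKernel_of_nonpos (hx : x ≤ 0) :
    Tendsto (fun q => secantKernel q x) atTop (𝓝 (1 - Real.exp x)) := by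
  have hbdd : ∀ᶠ q : ℝ in atTop, |Real.exp (q * x) - Real.exp x| ≤ 1 := by
    filter_upwards [eventually_ge_atTop 0] with q hq
    have hqx : Real.exp (q * x) ≤ 1 :=
      Real.exp_le_one_iff.2 (mul_nonpos_of_nonneg_of_nonpos hq hx)
    have hx1 : Real.exp x ≤ 1 := Real.exp_le_one_iff.2 hx
    rw [abs_le]
    constructor <;> linarith [Real.exp_pos (q * x), Real.exp_pos x]
  have hslope : Tendsto (fun q => (Real.exp (q * x) - Real.exp x) / (q - 1)) atTop (𝓝 0) :=
    tendsto_bdd_div_atTop_nhds_zero (b := -1) (B := 1)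
      (hbdd.mono fun _ h => (abs_le.1 h).1) (hbdd.mono fun _ h => (abs_le.1 h).2)
      (tendsto_atTop_add_const_right _ (-1) tendsto_id)
  simpa [secantKernel] using hslope.sub_const (Real.exp x - 1)

lemma secantKernel_eq_sub_truncation (hq : q ≠ 1) (x : ℝ) :
    secantKernel q x =
      ((Real.exp (q * x) - 1 - q * (if |x| ≤ 1 then x else 0)) -
        q * (Real.exp x - 1 - if |x| ≤ 1 then x else 0)) / (q - 1) := by
  have : q - 1 ≠ 0 := sub_ne_zero.2 hq
  unfold secantKernel
  field_simp
  ring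

lemma integrable_secantKernel (hν : Integrable (fun x : ℝ => min 1 (x ^ 2)) ν) (hq : 1 < q)
    (hqν : q ∈ Inu ν) : Integrable (secantKernel q) ν := by
  have h1 := integrable_exp_sub_one_sub_truncation hν hq.le hqν
  rw [funext (secantKernel_eq_sub_truncation hq.ne')]
  exact ((integrable_exp_mul_sub_one_sub_truncation hν hqν).sub (h1.const_mul q)).div_const _

lemma psiT_div_sub_one (σ : ℝ) (hν : Integrable (fun x : ℝ => min 1 (x ^ 2)) ν) (hq : 1 < q)
    (hqν : q ∈ Inu ν) :
    psiT σ ν q / (q - 1) = σ ^ 2 * q / 2 + ∫ x, secantKernel q x ∂ν := by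
  have h1 := integrable_exp_sub_one_sub_truncation hν hq.le hqν
  have hq1 : q - 1 ≠ 0 := (sub_pos.2 hq).ne'
  simp only [secantKernel_eq_sub_truncation hq.ne']
  rw [integral_div, integral_sub (integrable_exp_mul_sub_one_sub_truncation hν hqν)
    (h1.const_mul q), integral_const_mul, psiT, levyA]
  field_simp
  ring

lemma gaussian_le_and_lintegral_secantKernel_le
    (hν : Integrable (fun x : ℝ => min 1 (x ^ 2)) ν) (hq : 1 < q) (hqν : q ∈ Inu ν)
    (hψ : psiT σ ν q ≤ c * (q - 1)) :
    σ ^ 2 * q / 2 ≤ c ∧ ∫⁻ x, ENNReal.ofReal (secantKernel q x) ∂ν ≤ ENNReal.ofReal c := by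
  have hsum : σ ^ 2 * q / 2 + ∫ x, secantKernel q x ∂ν ≤ c := by
    rw [← psiT_div_sub_one σ hν hq hqν]
    exact (div_le_iff₀ (sub_pos.2 hq)).2 hψ
  have hgauss : 0 ≤ σ ^ 2 * q / 2 := by positivity
  have hjump : 0 ≤ ∫ x, secantKernel q x ∂ν := integral_nonneg (secantKernel_nonneg hq)
  rw [← ofReal_integral_eq_lintegral_ofReal (integrable_secantKernel hν hq hqν)
    (ae_of_all _ (secantKernel_nonneg hq))]
  exact ⟨by linarith, ENNReal.ofReal_le_ofReal (by linarith)⟩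

end SecantKernel

section LargeArgument

variable {σ c : ℝ} {ν : Measure ℝ}

lemma eq_zero_of_frequently_sq_mul_le (h : ∃ᶠ q : ℝ in atTop, σ ^ 2 * q / 2 ≤ c) : σ = 0 := by
  by_contra hσ
  have hlim : Tendsto (fun q : ℝ => σ ^ 2 * q / 2) atTop atTop :=
    (tendsto_id.const_mul_atTop (by positivity)).atTop_div_const two_pos
  exact h ((hlim.eventually_gt_atTop c).mono fun _ => not_le.2)

lemma measure_Ioi_zero_eq_zero_of_frequently
    (h : ∃ᶠ q in atTop, ∫⁻ x, ENNReal.ofReal (secantKernel q x) ∂ν ≤ ENNReal.ofReal c) :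
    ν (Ioi 0) = 0 := by
  have hle : ∫⁻ _ in Ioi (0 : ℝ), ∞ ∂ν ≤ ENNReal.ofReal c :=
    lintegral_le_of_tendsto_of_frequently_le (fun q => by fun_prop)
      (ae_restrict_of_forall_mem measurableSet_Ioi fun x hx =>
        ENNReal.tendsto_ofReal_atTop.comp (tendsto_secantKernel_atTop_of_pos hx))
      (h.mono fun _ hq => (setLIntegral_le_lintegral _ _).trans hq)
  rw [setLIntegral_const] at hle
  by_contra hpos
  exact ENNReal.ofReal_ne_top (top_le_iff.1 (ENNReal.top_mul hpos ▸ hle))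

lemma setLIntegral_Iic_one_sub_exp_le_of_frequently
    (h : ∃ᶠ q in atTop, ∫⁻ x, ENNReal.ofReal (secantKernel q x) ∂ν ≤ ENNReal.ofReal c) :
    ∫⁻ x in Iic 0, ENNReal.ofReal (1 - Real.exp x) ∂ν ≤ ENNReal.ofReal c :=
  lintegral_le_of_tendsto_of_frequently_le (fun q => by fun_prop)
    (ae_restrict_of_forall_mem measurableSet_Iic fun _ hx =>
      ENNReal.tendsto_ofReal (tendsto_secantKernel_of_nonpos hx))
    (h.mono fun _ hq => (setLIntegral_le_lintegral _ _).trans hq)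

lemma min_one_abs_le_two_mul_one_sub_exp {x : ℝ} (hx : x ≤ 0) :
    min 1 |x| ≤ 2 * (1 - Real.exp x) := by
  have hexp : Real.exp x * (1 - x) ≤ 1 := by
    calc Real.exp x * (1 - x) ≤ Real.exp x * Real.exp (-x) := by
          gcongr
          exact Real.one_sub_le_exp_neg x
      _ = 1 := by rw [← Real.exp_add, add_neg_cancel, Real.exp_zero]
  rw [abs_of_nonpos hx]
  rcases le_total 1 (-x) with h | h
  · rw [min_eq_left h]
    nlinarith [Real.exp_pos x]
  · rw [min_eq_right h]
    nlinarith [Real.exp_pos x]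

lemma lintegral_min_one_abs_lt_top (hpos : ν (Ioi 0) = 0)
    (hneg : ∫⁻ x in Iic 0, ENNReal.ofReal (1 - Real.exp x) ∂ν < ∞) :
    ∫⁻ x, ENNReal.ofReal (min 1 |x|) ∂ν < ∞ := by
  have hrestrict : ν.restrict (Iic 0) = ν :=
    Measure.restrict_eq_self_of_ae_mem (by rwa [← compl_Iic] at hpos)
  calc ∫⁻ x, ENNReal.ofReal (min 1 |x|) ∂ν
      = ∫⁻ x in Iic 0, ENNReal.ofReal (min 1 |x|) ∂ν := by rw [hrestrict]
    _ ≤ ∫⁻ x in Iic 0, 2 * ENNReal.ofReal (1 - Real.exp x) ∂ν := by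
        refine setLIntegral_mono (by fun_prop) fun x hx => ?_
        rw [← ENNReal.ofReal_ofNat 2, ← ENNReal.ofReal_mul zero_le_two]
        exact ENNReal.ofReal_le_ofReal (min_one_abs_le_two_mul_one_sub_exp hx)
    _ = 2 * ∫⁻ x in Iic 0, ENNReal.ofReal (1 - Real.exp x) ∂ν :=
        lintegral_const_mul _ (by fun_prop)
    _ < ∞ := ENNReal.mul_lt_top ENNReal.ofNat_lt_top hneg

lemma setIntegral_Iio_one_sub_exp_le (hc : 0 ≤ c)
    (hneg : ∫⁻ x in Iic 0, ENNReal.ofReal (1 - Real.exp x) ∂ν ≤ ENNReal.ofReal c) :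
    ∫ x in Iio 0, (1 - Real.exp x) ∂ν ≤ c := by
  have hnonneg : 0 ≤ᵐ[ν.restrict (Iio 0)] fun x => 1 - Real.exp x :=
    ae_restrict_of_forall_mem measurableSet_Iio fun _ hx =>
      sub_nonneg.2 (Real.exp_le_one_iff.2 (le_of_lt hx))
  rw [integral_eq_lintegral_of_nonneg_ae hnonneg (by fun_prop)]
  exact ENNReal.toReal_le_of_le_ofReal hc ((lintegral_mono_set Iio_subset_Iic_self).trans hneg)

end LargeArgument

theorem stmt_6_general (σ c : ℝ) (ν : Measure ℝ)
    (hν2 : ∫⁻ x, ENNReal.ofReal (min 1 (x ^ 2)) ∂ν < ⊤)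
    (h : ∃ᶠ q in atTop, q ∈ Inu ν ∧ psiT σ ν q ≤ c * (q - 1)) :
    σ = 0 ∧ ν (Ioi 0) = 0 ∧
      (∫⁻ x, ENNReal.ofReal (min 1 |x|) ∂ν < ⊤) ∧
      (∫ x in Iio (0 : ℝ), (1 - Real.exp x) ∂ν ≤ c) := by
  have hν : Integrable (fun x : ℝ => min 1 (x ^ 2)) ν :=
    (lintegral_ofReal_ne_top_iff_integrable (by fun_prop)
      (ae_of_all _ fun _ => by positivity)).1 hν2.ne
  have hbound : ∃ᶠ q : ℝ in atTop, σ ^ 2 * q / 2 ≤ c ∧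
      ∫⁻ x, ENNReal.ofReal (secantKernel q x) ∂ν ≤ ENNReal.ofReal c :=
    (h.and_eventually (eventually_gt_atTop 1)).mono fun _ ⟨⟨hqν, hψ⟩, hq⟩ =>
      gaussian_le_and_lintegral_secantKernel_le hν hq hqν hψ
  have hσ : σ = 0 := eq_zero_of_frequently_sq_mul_le (hbound.mono fun _ => And.left)
  have hkernel := hbound.mono fun _ => And.right
  have hpos := measure_Ioi_zero_eq_zero_of_frequently hkernel
  have hneg := setLIntegral_Iic_one_sub_exp_le_of_frequently hkernel
  have hc : 0 ≤ c := by
    obtain ⟨_, hgauss, -⟩ := hbound.exists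
    simpa [hσ] using hgauss
  exact ⟨hσ, hpos, lintegral_min_one_abs_lt_top hpos (hneg.trans_lt ENNReal.ofReal_lt_top),
    setIntegral_Iio_one_sub_exp_le hc hneg⟩

/-- If for every `q > 1` one has `q ∈ I_ν` and `φ(q) < 0`, then `σ = 0`, `ν` gives no mass to
`(0,∞)`, `∫ min(1,|x|) ν(dx) < ∞`, and `γ = ∫_{(−∞,0)} (1 − e^x) ν(dx) ≤ 1`. -/
theorem stmt_6 (σ : ℝ) (ν : Measure ℝ)
    (hν0 : ν {0} = 0)
    (hν2 : ∫⁻ x, ENNReal.ofReal (min 1 (x ^ 2)) ∂ν < ⊤)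
    (hnz : σ ≠ 0 ∨ ν ≠ 0)
    (hIν : Set.Icc (0 : ℝ) 1 ⊆ Inu ν)
    (h : ∀ q : ℝ, 1 < q → q ∈ Inu ν ∧ phiF σ ν q < 0) :
    σ = 0 ∧ ν (Set.Ioi 0) = 0 ∧
      (∫⁻ x, ENNReal.ofReal (min 1 |x|) ∂ν < ⊤) ∧
      (∫ x in Set.Iio (0 : ℝ), (1 - Real.exp x) ∂ν ≤ 1) := by
  refine stmt_6_general σ 1 ν hν2 (((eventually_gt_atTop 1).mono fun q hq => ?_).frequently)
  exact ⟨(h q hq).1, by linarith [(h q hq).2, show phiF σ ν q = psiT σ ν q - (q - 1) from rfl]⟩
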